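/- Assume Π⁺ is continuous, and assume that for each integer N ≥ 1 equation (E) with parameter N has a unique continuous nondecreasing solution F_N with values in (m, M), and that equation (E∞) has at most one continuous nondecreasing solution with values in (m, M). Then the pointwise limit F_∞(x) := lim_{N→∞} F_N(x) exists for every x ∈ ℝ and F_∞ solves (E∞). Moreover, for every v ∈ (m, M), the aggregate expected profit π_N(v) := F_N⁻¹(v)·N·∫₀¹ (v − F_N(y·F_N⁻¹(v)))·y^{N−1} dy tends to 0 as N → ∞. -/

import Mathlib

open MeasureTheory Filter Set

/-- Centered Gaussian density with variance `σ²`. -/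
noncomputable def gq (σ z : ℝ) : ℝ :=
  Real.exp (-(z ^ 2) / (2 * σ ^ 2)) / (σ * Real.sqrt (2 * Real.pi))

/-- The averaged kernel `q̄(σ,x,z)`. -/
noncomputable def gqbar (σ x z : ℝ) : ℝ :=
  if x = 0 then gq σ z else (1 / x) * ∫ y in (0:ℝ)..x, gq σ (y - z)

/-- `Φ⁺(y) = E[V·1_{V>y}]`. -/
noncomputable def Phip {Ω : Type*} [MeasurableSpace Ω] (P : Measure Ω) (V : Ω → ℝ) (y : ℝ) : ℝ :=
  ∫ ω in {ω | V ω > y}, V ω ∂P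

/-- `Π⁺(y) = P(V > y)`. -/
noncomputable def Pip {Ω : Type*} [MeasurableSpace Ω] (P : Measure Ω) (V : Ω → ℝ) (y : ℝ) : ℝ :=
  (P {ω | V ω > y}).toReal

/-- `Φ⁻(y) = E[V·1_{V≤y}]`. -/
noncomputable def Phim {Ω : Type*} [MeasurableSpace Ω] (P : Measure Ω) (V : Ω → ℝ) (y : ℝ) : ℝ :=
  ∫ ω in {ω | V ω ≤ y}, V ω ∂P

/-- `Π⁻(y) = P(V ≤ y)`. -/
noncomputable def Pim {Ω : Type*} [MeasurableSpace Ω] (P : Measure Ω) (V : Ω → ℝ) (y : ℝ) : ℝ :=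
  (P {ω | V ω ≤ y}).toReal

/-- `Ψ⁺ = Φ⁺/Π⁺`. -/
noncomputable def Psip {Ω : Type*} [MeasurableSpace Ω] (P : Measure Ω) (V : Ω → ℝ) (y : ℝ) : ℝ :=
  Phip P V y / Pip P V y

/-- `Ψ⁻ = Φ⁻/Π⁻`. -/
noncomputable def Psim {Ω : Type*} [MeasurableSpace Ω] (P : Measure Ω) (V : Ω → ℝ) (y : ℝ) : ℝ :=
  Phim P V y / Pim P V y

/-- `φ⁺_g`. -/
noncomputable def phip {Ω : Type*} [MeasurableSpace Ω] (P : Measure Ω) (V : Ω → ℝ)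
    (σ : ℝ) (g : ℝ → ℝ) (x : ℝ) : ℝ :=
  (∫ z, Phip P V (g z) * gq σ (x - z)) / (∫ z, Pip P V (g z) * gq σ (x - z))

/-- `φ⁻_g`. -/
noncomputable def phim {Ω : Type*} [MeasurableSpace Ω] (P : Measure Ω) (V : Ω → ℝ)
    (σ : ℝ) (g : ℝ → ℝ) (x : ℝ) : ℝ :=
  (∫ z, Phim P V (g z) * gq σ (x - z)) / (∫ z, Pim P V (g z) * gq σ (x - z))

/-- `φ_g`, equal to `φ⁺_g` on `[0,∞)` and `φ⁻_g` on `(−∞,0)`. -/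
noncomputable def phig {Ω : Type*} [MeasurableSpace Ω] (P : Measure Ω) (V : Ω → ℝ)
    (σ : ℝ) (g : ℝ → ℝ) (x : ℝ) : ℝ :=
  if 0 ≤ x then phip P V σ g x else phim P V σ g x

/-- The interior of the support of the law of `V` is `(m, M)` (with `V` bounded). -/
def SuppIoo {Ω : Type*} [MeasurableSpace Ω] (P : Measure Ω) (V : Ω → ℝ) (m M : ℝ) : Prop :=
  m < M ∧ (∀ᵐ ω ∂P, V ω ∈ Set.Icc m M) ∧
    (∀ y < M, 0 < P {ω | V ω > y}) ∧ (∀ y, m < y → 0 < P {ω | V ω ≤ y})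

/-- Equation (E). -/
def SolvesE {Ω : Type*} [MeasurableSpace Ω] (P : Measure Ω) (V : Ω → ℝ)
    (σ : ℝ) (N : ℕ) (F : ℝ → ℝ) : Prop :=
  ∀ x : ℝ, F x =
    ∫ z, ((1 / (N:ℝ)) * gq σ (x - z) + (((N:ℝ) - 1) / (N:ℝ)) * gqbar σ x z) * phig P V σ F z

/-- Equation (E∞). -/
def SolvesEInf {Ω : Type*} [MeasurableSpace Ω] (P : Measure Ω) (V : Ω → ℝ)
    (σ : ℝ) (F : ℝ → ℝ) : Prop :=
  (∀ x : ℝ, x ≠ 0 →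
    F x = (1 / x) * ∫ y in (0:ℝ)..x, ∫ z, gq σ (y - z) * phig P V σ F z) ∧
  F 0 = ∫ z, gq σ z * phig P V σ F z


/-! ### Gaussian kernel -/

lemma gq_eq (σ : ℝ) (hσ : 0 < σ) (z : ℝ) :
    gq σ z = ProbabilityTheory.gaussianPDFReal 0 (Real.toNNReal (σ ^ 2)) z := by
  have h : Real.sqrt (2 * Real.pi * σ ^ 2) = σ * Real.sqrt (2 * Real.pi) := by
    rw [Real.sqrt_mul (by positivity), Real.sqrt_sq hσ.le, mul_comm]
  simp only [gq, ProbabilityTheory.gaussianPDFReal,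
    Real.coe_toNNReal _ (sq_nonneg σ), sub_zero]
  rw [h]
  field_simp

lemma gq_pos (σ : ℝ) (hσ : 0 < σ) (z : ℝ) : 0 < gq σ z := by
  unfold gq; positivity

lemma gq_neg (σ z : ℝ) : gq σ (-z) = gq σ z := by
  unfold gq; simp

lemma gq_continuous (σ : ℝ) : Continuous (gq σ) := by
  unfold gq
  fun_prop

lemma gq_integrable (σ : ℝ) (hσ : 0 < σ) : Integrable (gq σ) := by
  have : gq σ = ProbabilityTheory.gaussianPDFReal 0 (Real.toNNReal (σ ^ 2)) := by
    ext z; exact gq_eq σ hσ z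
  rw [this]
  exact ProbabilityTheory.integrable_gaussianPDFReal _ _

lemma gq_integral (σ : ℝ) (hσ : 0 < σ) : ∫ z, gq σ z = 1 := by
  have : gq σ = ProbabilityTheory.gaussianPDFReal 0 (Real.toNNReal (σ ^ 2)) := by
    ext z; exact gq_eq σ hσ z
  rw [this]
  apply ProbabilityTheory.integral_gaussianPDFReal_eq_one
  exact (Real.toNNReal_pos.2 (by positivity)).ne'

lemma gq_sub_integrable (σ : ℝ) (hσ : 0 < σ) (y : ℝ) : Integrable (fun z => gq σ (y - z)) :=
  (gq_integrable σ hσ).comp_sub_left y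

lemma gq_sub_integral (σ : ℝ) (hσ : 0 < σ) (y : ℝ) : ∫ z, gq σ (y - z) = 1 := by
  rw [integral_sub_left_eq_self (gq σ) volume y, gq_integral σ hσ]

lemma gq_abs_mul_integrable (σ : ℝ) (hσ : 0 < σ) : Integrable (fun z => |z| * gq σ z) := by
  have h := (integrable_mul_exp_neg_mul_sq (b := 1 / (2 * σ ^ 2)) (by positivity)).abs
  refine (h.div_const (σ * Real.sqrt (2 * Real.pi))).congr ?_
  filter_upwards with z
  simp only [gq, abs_mul, Real.abs_exp]
  rw [mul_div_assoc]
  congr 3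
  ring

/-- Convolution with the Gaussian kernel. -/
noncomputable def Hc (σ : ℝ) (f : ℝ → ℝ) (y : ℝ) : ℝ := ∫ z, gq σ (y - z) * f z

lemma Hc_integrable {σ : ℝ} (hσ : 0 < σ) {f : ℝ → ℝ} (hf : Measurable f) {C : ℝ}
    (hC : ∀ z, |f z| ≤ C) (y : ℝ) : Integrable (fun z => gq σ (y - z) * f z) := by
  refine (gq_sub_integrable σ hσ y).mul_bdd (c := C) hf.aestronglyMeasurable ?_
  filter_upwards with z using hC z

lemma Hc_tendsto {ι : Type*} {l : Filter ι} [l.IsCountablyGenerated] {σ : ℝ} (hσ : 0 < σ)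
    {f : ι → ℝ → ℝ} {g : ℝ → ℝ} (hf : ∀ᶠ n in l, Measurable (f n)) {C : ℝ}
    (hC : ∀ᶠ n in l, ∀ z, |f n z| ≤ C)
    (h : ∀ z, Tendsto (fun n => f n z) l (nhds (g z))) (y : ℝ) :
    Tendsto (fun n => Hc σ (f n) y) l (nhds (Hc σ g y)) := by
  refine tendsto_integral_filter_of_dominated_convergence (fun z => gq σ (y - z) * C) ?_ ?_ ?_ ?_
  · filter_upwards [hf] with n hn
    exact (((gq_continuous σ).comp (continuous_const.sub continuous_id)).measurable.mul
      hn).aestronglyMeasurable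
  · filter_upwards [hC] with n hn
    filter_upwards with z
    rw [norm_mul, Real.norm_of_nonneg (gq_pos σ hσ _).le]
    exact mul_le_mul_of_nonneg_left (hn z) (gq_pos σ hσ _).le
  · exact (gq_sub_integrable σ hσ y).mul_const C
  · filter_upwards with z
    exact (h z).const_mul _

lemma Hc_shift (σ : ℝ) (f : ℝ → ℝ) (y : ℝ) : Hc σ f y = ∫ u, gq σ u * f (y - u) := by
  unfold Hc
  rw [← integral_sub_left_eq_self (fun u => gq σ u * f (y - u)) volume y]
  simp

lemma Hc_tendsto_lim {l : Filter ℝ} [l.IsCountablyGenerated] {σ : ℝ} (hσ : 0 < σ)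
    {f : ℝ → ℝ} (hf : Measurable f) {C L : ℝ} (hC : ∀ z, |f z| ≤ C)
    (hl : ∀ c : ℝ, Tendsto (fun x => x - c) l l)
    (h : Tendsto f l (nhds L)) :
    Tendsto (fun y => Hc σ f y) l (nhds L) := by
  have h1 : L = ∫ u, gq σ u * L := by rw [integral_mul_const, gq_integral σ hσ, one_mul]
  simp_rw [Hc_shift]
  nth_rw 1 [h1]
  refine tendsto_integral_filter_of_dominated_convergence (fun z => gq σ z * C) ?_ ?_ ?_ ?_
  · filter_upwards with n
    exact ((gq_continuous σ).measurable.mul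
      (hf.comp (measurable_const.sub measurable_id))).aestronglyMeasurable
  · filter_upwards with n
    filter_upwards with z
    rw [norm_mul, Real.norm_of_nonneg (gq_pos σ hσ _).le]
    exact mul_le_mul_of_nonneg_left (hC _) (gq_pos σ hσ _).le
  · exact (gq_integrable σ hσ).mul_const C
  · filter_upwards with z
    exact (h.comp (hl z)).const_mul _

lemma Hc_mono {σ : ℝ} (hσ : 0 < σ) {f g : ℝ → ℝ} (hf : Measurable f) (hg : Measurable g)
    {C D : ℝ} (hC : ∀ z, |f z| ≤ C) (hD : ∀ z, |g z| ≤ D) (h : ∀ z, f z ≤ g z) (y : ℝ) :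
    Hc σ f y ≤ Hc σ g y := by
  refine integral_mono (Hc_integrable hσ hf hC y) (Hc_integrable hσ hg hD y) fun z => ?_
  exact mul_le_mul_of_nonneg_left (h z) (gq_pos σ hσ _).le

lemma Hc_const_mul (σ c : ℝ) (f : ℝ → ℝ) (y : ℝ) : Hc σ (fun z => c * f z) y = c * Hc σ f y := by
  unfold Hc
  rw [← integral_const_mul]
  congr 1; ext z; ring

lemma Hc_const {σ : ℝ} (hσ : 0 < σ) (c y : ℝ) : Hc σ (fun _ => c) y = c := by
  unfold Hc
  rw [integral_mul_const, gq_sub_integral σ hσ, one_mul]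

lemma Hc_abs_le {σ : ℝ} (hσ : 0 < σ) {f : ℝ → ℝ} (hf : Measurable f) {C : ℝ}
    (hC : ∀ z, |f z| ≤ C) (y : ℝ) : |Hc σ f y| ≤ C := by
  rw [abs_le]
  constructor
  · rw [← Hc_const hσ (-C) y]
    exact Hc_mono hσ measurable_const hf (C := |-C|) (fun _ => le_rfl) hC
      (fun z => (abs_le.1 (hC z)).1) y
  · rw [← Hc_const hσ C y]
    exact Hc_mono hσ hf measurable_const (D := |C|) hC (fun _ => le_rfl)
      (fun z => (abs_le.1 (hC z)).2) y

lemma Hc_pos {σ : ℝ} (hσ : 0 < σ) {f : ℝ → ℝ} (hf : Continuous f) {C : ℝ}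
    (hC : ∀ z, |f z| ≤ C) (h0 : ∀ z, 0 ≤ f z) (z0 : ℝ) (hz : 0 < f z0) (y : ℝ) :
    0 < Hc σ f y := by
  refine integral_pos_of_integrable_nonneg_nonzero (x := z0) ?_
    (Hc_integrable hσ hf.measurable hC y) ?_ ?_
  · exact ((gq_continuous σ).comp (continuous_const.sub continuous_id)).mul hf
  · intro z; exact mul_nonneg (gq_pos σ hσ _).le (h0 z)
  · exact (mul_pos (gq_pos σ hσ _) hz).ne'

lemma gq_diff_le (σ : ℝ) (hσ : 0 < σ) (u w : ℝ) :
    |gq σ u - gq σ w| ≤ |u - w| / (2 * σ ^ 2) * ((|u| + |w|) * (gq σ u + gq σ w)) := by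
  have key : ∀ s t : ℝ, |Real.exp s - Real.exp t| ≤ |s - t| * (Real.exp s + Real.exp t) := by
    intro s t
    wlog hst : t ≤ s generalizing s t
    · have := this t s (by linarith)
      rw [abs_sub_comm, abs_sub_comm s t, add_comm (Real.exp s)]
      exact this
    rw [abs_of_nonneg (sub_nonneg.2 (Real.exp_le_exp.2 hst)), abs_of_nonneg (sub_nonneg.2 hst)]
    have h1 : Real.exp t = Real.exp s * Real.exp (t - s) := by
      rw [← Real.exp_add]; congr 1; ring
    have h2 := Real.add_one_le_exp (t - s)
    have h3 := Real.exp_pos s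
    have h4 := Real.exp_pos t
    have h5 : Real.exp s - Real.exp t ≤ Real.exp s * (s - t) := by
      rw [h1]; nlinarith
    nlinarith [mul_nonneg (sub_nonneg.2 hst) h4.le]
  have hc : 0 < σ * Real.sqrt (2 * Real.pi) := by positivity
  unfold gq
  rw [← sub_div, abs_div, abs_of_pos hc, ← add_div, ← mul_div_assoc, ← mul_div_assoc]
  gcongr
  refine (key _ _).trans ?_
  rw [← mul_assoc]
  gcongr
  rw [← sub_div, abs_div, abs_of_pos (show (0:ℝ) < 2 * σ ^ 2 by positivity), div_mul_eq_mul_div]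
  gcongr
  rw [show -u ^ 2 - -w ^ 2 = -((u - w) * (u + w)) by ring, abs_neg, abs_mul]
  gcongr
  exact abs_add_le u w

/-- L¹ modulus constant. -/
noncomputable def gK (σ : ℝ) : ℝ :=
  2 + (4 * (∫ z, |z| * gq σ z) + 2) / (2 * σ ^ 2)

lemma gK_pos (σ : ℝ) (hσ : 0 < σ) : 0 < gK σ := by
  have : 0 ≤ ∫ z, |z| * gq σ z := integral_nonneg fun z =>
    mul_nonneg (abs_nonneg _) (gq_pos σ hσ z).le
  unfold gK; positivity

lemma gq_L1 (σ : ℝ) (hσ : 0 < σ) (x y : ℝ) :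
    ∫ z, |gq σ (x - z) - gq σ (y - z)| ≤ gK σ * |x - y| := by
  have hI : 0 ≤ ∫ z, |z| * gq σ z := integral_nonneg fun z =>
    mul_nonneg (abs_nonneg _) (gq_pos σ hσ z).le
  have hi : Integrable (fun z => |gq σ (x - z) - gq σ (y - z)|) :=
    ((gq_sub_integrable σ hσ x).sub (gq_sub_integrable σ hσ y)).abs
  rcases le_total |x - y| 1 with h | h
  · have hmx : Integrable (fun z => |x - z| * gq σ (x - z)) :=
      (gq_abs_mul_integrable σ hσ).comp_sub_left x
    have hmy : Integrable (fun z => |y - z| * gq σ (y - z)) :=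
      (gq_abs_mul_integrable σ hσ).comp_sub_left y
    have hqx := gq_sub_integrable σ hσ x
    have hqy := gq_sub_integrable σ hσ y
    have hb : ∀ z, |gq σ (x - z) - gq σ (y - z)| ≤ |x - y| / (2 * σ ^ 2) *
        ((2 * (|x - z| * gq σ (x - z)) + 2 * (|y - z| * gq σ (y - z))) +
          (gq σ (x - z) + gq σ (y - z))) := by
      intro z
      refine (gq_diff_le σ hσ _ _).trans ?_
      rw [show x - z - (y - z) = x - y by ring]
      gcongr
      have h1 : |x - z| ≤ |y - z| + 1 := by
        have := abs_add_le (x - y) (y - z)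
        rw [show x - y + (y - z) = x - z by ring] at this
        linarith
      have h2 : |y - z| ≤ |x - z| + 1 := by
        have := abs_add_le (y - x) (x - z)
        rw [show y - x + (x - z) = y - z by ring, abs_sub_comm y x] at this
        linarith
      nlinarith [gq_pos σ hσ (x - z), gq_pos σ hσ (y - z)]
    calc ∫ z, |gq σ (x - z) - gq σ (y - z)| ≤ ∫ z, |x - y| / (2 * σ ^ 2) *
        ((2 * (|x - z| * gq σ (x - z)) + 2 * (|y - z| * gq σ (y - z))) +
          (gq σ (x - z) + gq σ (y - z))) := by
          refine integral_mono hi ?_ hb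
          exact (((hmx.const_mul 2).add (hmy.const_mul 2)).add (hqx.add hqy)).const_mul _
      _ = |x - y| / (2 * σ ^ 2) * (4 * (∫ z, |z| * gq σ z) + 2) := by
          have e1 : Integrable (fun z => 2 * (|x - z| * gq σ (x - z)) +
              2 * (|y - z| * gq σ (y - z))) := (hmx.const_mul 2).add (hmy.const_mul 2)
          have e2 : Integrable (fun z => gq σ (x - z) + gq σ (y - z)) := hqx.add hqy
          rw [integral_const_mul, integral_add e1 e2, integral_add (hmx.const_mul 2) (hmy.const_mul 2), integral_add hqx hqy,
            integral_const_mul, integral_const_mul, gq_sub_integral σ hσ, gq_sub_integral σ hσ,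
            integral_sub_left_eq_self (fun z => |z| * gq σ z) volume x,
            integral_sub_left_eq_self (fun z => |z| * gq σ z) volume y]
          ring
      _ ≤ gK σ * |x - y| := by
          unfold gK
          have := abs_nonneg (x - y)
          rw [div_mul_eq_mul_div, add_mul, div_mul_eq_mul_div,
            mul_comm (|x - y|) (4 * (∫ z, |z| * gq σ z) + 2)]
          linarith
  · calc ∫ z, |gq σ (x - z) - gq σ (y - z)| ≤ ∫ z, (gq σ (x - z) + gq σ (y - z)) := by
          refine integral_mono hi ((gq_sub_integrable σ hσ x).add (gq_sub_integrable σ hσ y)) ?_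
          intro z
          have := gq_pos σ hσ (x - z)
          have := gq_pos σ hσ (y - z)
          simp only
          rw [abs_le]; constructor <;> linarith
      _ = 2 := by
          rw [integral_add (gq_sub_integrable σ hσ x) (gq_sub_integrable σ hσ y),
            gq_sub_integral σ hσ, gq_sub_integral σ hσ]; norm_num
      _ ≤ gK σ * |x - y| := by
          have : 2 ≤ gK σ := by
            unfold gK
            have : 0 ≤ (4 * (∫ z, |z| * gq σ z) + 2) / (2 * σ ^ 2) := by positivity
            linarith
          nlinarith

lemma Hc_lip {σ : ℝ} (hσ : 0 < σ) {f : ℝ → ℝ} (hf : Measurable f) {C : ℝ}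
    (hC : ∀ z, |f z| ≤ C) (x y : ℝ) : |Hc σ f x - Hc σ f y| ≤ C * gK σ * |x - y| := by
  have hC0 : 0 ≤ C := (abs_nonneg _).trans (hC 0)
  have hi : Integrable (fun z => |gq σ (x - z) - gq σ (y - z)|) :=
    ((gq_sub_integrable σ hσ x).sub (gq_sub_integrable σ hσ y)).abs
  unfold Hc
  rw [← integral_sub (Hc_integrable hσ hf hC x) (Hc_integrable hσ hf hC y)]
  calc |∫ z, (gq σ (x - z) * f z - gq σ (y - z) * f z)|
      ≤ ∫ z, |gq σ (x - z) - gq σ (y - z)| * C := by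
        rw [← Real.norm_eq_abs]
        refine norm_integral_le_of_norm_le (hi.mul_const C) ?_
        filter_upwards with z
        rw [← sub_mul, norm_mul]
        exact mul_le_mul_of_nonneg_left (hC z) (abs_nonneg _)
    _ ≤ C * gK σ * |x - y| := by
        rw [integral_mul_const]
        nlinarith [gq_L1 σ hσ x y]

lemma Hc_continuous {σ : ℝ} (hσ : 0 < σ) {f : ℝ → ℝ} (hf : Measurable f) {C : ℝ}
    (hC : ∀ z, |f z| ≤ C) : Continuous (Hc σ f) := by
  have hC0 : 0 ≤ C := (abs_nonneg _).trans (hC 0)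
  have : LipschitzWith (Real.toNNReal (C * gK σ)) (Hc σ f) := by
    refine LipschitzWith.of_dist_le_mul fun x y => ?_
    rw [Real.coe_toNNReal _ (mul_nonneg hC0 (gK_pos σ hσ).le)]
    exact Hc_lip hσ hf hC x y
  exact this.continuous

/-- Average of `h` on `[0,x]`. -/
noncomputable def Av (h : ℝ → ℝ) (x : ℝ) : ℝ := ∫ t in (0:ℝ)..1, h (x * t)

lemma Av_eq (h : ℝ → ℝ) (x : ℝ) (hx : x ≠ 0) : Av h x = (1 / x) * ∫ y in (0:ℝ)..x, h y := by
  have := intervalIntegral.mul_integral_comp_mul_left (a := 0) (b := 1) (f := h) x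
  rw [mul_zero, mul_one] at this
  unfold Av
  rw [← this]; field_simp

lemma Av_zero (h : ℝ → ℝ) : Av h 0 = h 0 := by simp [Av]

lemma gqbar_eq (σ x z : ℝ) : gqbar σ x z = ∫ t in (0:ℝ)..1, gq σ (x * t - z) := by
  unfold gqbar
  split_ifs with h
  · subst h; simp [gq_neg]
  · exact (Av_eq (fun y => gq σ (y - z)) x h).symm

lemma fub_integrable {σ : ℝ} (hσ : 0 < σ) {f : ℝ → ℝ} (hf : Measurable f) {C : ℝ}
    (hC : ∀ z, |f z| ≤ C) (x : ℝ) :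
    Integrable (fun p : ℝ × ℝ => gq σ (x * p.1 - p.2) * f p.2)
      ((volume.restrict (Ioc (0:ℝ) 1)).prod volume) := by
  have hm : Measurable (fun p : ℝ × ℝ => gq σ (x * p.1 - p.2) * f p.2) := by
    refine Measurable.mul ?_ (hf.comp measurable_snd)
    exact ((gq_continuous σ).comp (by fun_prop : Continuous fun p : ℝ × ℝ =>
      x * p.1 - p.2)).measurable
  rw [integrable_prod_iff hm.aestronglyMeasurable]
  constructor
  · filter_upwards with t
    exact Hc_integrable hσ hf hC (x * t)
  · refine Integrable.of_bound (C := C) ?_ ?_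
    · exact (hm.norm.stronglyMeasurable.integral_prod_right (ν := volume)).aestronglyMeasurable
    · filter_upwards with t
      rw [Real.norm_of_nonneg (integral_nonneg fun z => norm_nonneg _)]
      calc ∫ z, ‖gq σ (x * t - z) * f z‖ ≤ ∫ z, gq σ (x * t - z) * C := by
            refine integral_mono (Hc_integrable hσ hf hC (x * t)).norm
              ((gq_sub_integrable σ hσ _).mul_const C) fun z => ?_
            simp only
            rw [norm_mul, Real.norm_of_nonneg (gq_pos σ hσ _).le]
            exact mul_le_mul_of_nonneg_left (hC z) (gq_pos σ hσ _).le
        _ = C := by rw [integral_mul_const, gq_sub_integral σ hσ, one_mul]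

lemma gqbar_fubini {σ : ℝ} (hσ : 0 < σ) {f : ℝ → ℝ} (hf : Measurable f) {C : ℝ}
    (hC : ∀ z, |f z| ≤ C) (x : ℝ) :
    Integrable (fun z => gqbar σ x z * f z) ∧ ∫ z, gqbar σ x z * f z = Av (Hc σ f) x := by
  have hI := fub_integrable hσ hf hC x
  have he : (fun z => gqbar σ x z * f z) =
      fun z => ∫ t in Ioc (0:ℝ) 1, gq σ (x * t - z) * f z := by
    ext z
    rw [gqbar_eq, intervalIntegral.integral_of_le zero_le_one, integral_mul_const]
  constructor
  · rw [he]; exact hI.integral_prod_right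
  · rw [he]
    unfold Av Hc
    rw [intervalIntegral.integral_of_le zero_le_one]
    exact (integral_integral_swap hI).symm

lemma solvesE_rhs {σ : ℝ} (hσ : 0 < σ) {f : ℝ → ℝ} (hf : Measurable f) {C : ℝ}
    (hC : ∀ z, |f z| ≤ C) (x a b : ℝ) :
    ∫ z, (a * gq σ (x - z) + b * gqbar σ x z) * f z = a * Hc σ f x + b * Av (Hc σ f) x := by
  obtain ⟨h1, h2⟩ := gqbar_fubini hσ hf hC x
  have h3 := Hc_integrable hσ hf hC x
  rw [← h2, Hc, ← integral_const_mul, ← integral_const_mul,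
    ← integral_add (h3.const_mul a) (h1.const_mul b)]
  congr 1; ext z; ring

lemma Av_lip {h : ℝ → ℝ} (hc : Continuous h) {K : ℝ} (hK : ∀ x y, |h x - h y| ≤ K * |x - y|)
    (x y : ℝ) : |Av h x - Av h y| ≤ K * |x - y| := by
  have hK0 : 0 ≤ K := by
    have := (abs_nonneg _).trans (hK 1 0); simpa using this
  unfold Av
  rw [← intervalIntegral.integral_sub]
  · have := intervalIntegral.norm_integral_le_of_norm_le_const (a := (0:ℝ)) (b := 1)
      (f := fun t => h (x * t) - h (y * t)) (C := K * |x - y|) ?_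
    · simpa using this
    · intro t ht
      rw [uIoc_of_le zero_le_one] at ht
      refine (hK _ _).trans ?_
      rw [← sub_mul, abs_mul, abs_of_pos ht.1]
      have := mul_nonneg hK0 (abs_nonneg (x - y))
      nlinarith [ht.2]
  · exact (hc.comp (by fun_prop)).intervalIntegrable _ _
  · exact (hc.comp (by fun_prop)).intervalIntegrable _ _

lemma Av_tendsto {ι : Type*} {l : Filter ι} [l.IsCountablyGenerated]
    {h : ι → ℝ → ℝ} {g : ℝ → ℝ} (hh : ∀ᶠ n in l, Continuous (h n)) {C : ℝ}
    (hC : ∀ᶠ n in l, ∀ z, |h n z| ≤ C)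
    (H : ∀ z, Tendsto (fun n => h n z) l (nhds (g z))) (x : ℝ) :
    Tendsto (fun n => Av (h n) x) l (nhds (Av g x)) := by
  refine intervalIntegral.tendsto_integral_filter_of_dominated_convergence (fun _ => C) ?_ ?_ ?_ ?_
  · filter_upwards [hh] with n hn
    exact (hn.comp (by fun_prop)).aestronglyMeasurable
  · filter_upwards [hC] with n hn
    filter_upwards with t _ using hn _
  · simp
  · filter_upwards with t _ using H _

lemma Av_tendsto_lim {l : Filter ℝ} [l.IsCountablyGenerated]
    {h : ℝ → ℝ} (hh : Continuous h) {C L : ℝ} (hC : ∀ z, |h z| ≤ C)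
    (hl : ∀ t : ℝ, 0 < t → Tendsto (fun x => x * t) l l)
    (H : Tendsto h l (nhds L)) : Tendsto (Av h) l (nhds L) := by
  have h1 : L = ∫ t in (0:ℝ)..1, L := by simp
  nth_rw 1 [h1]
  refine intervalIntegral.tendsto_integral_filter_of_dominated_convergence (fun _ => C) ?_ ?_ ?_ ?_
  · filter_upwards with n
    exact (hh.comp (by fun_prop)).aestronglyMeasurable
  · filter_upwards with n
    filter_upwards with t _ using hC _
  · simp
  · filter_upwards with t ht
    rw [uIoc_of_le zero_le_one] at ht
    exact H.comp (hl t ht.1)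

/-! ### Facts on the law of `V` -/

section law

set_option linter.unusedSectionVars false
set_option linter.unusedVariables false

variable {Ω : Type*} [MeasurableSpace Ω] {P : Measure Ω} [IsProbabilityMeasure P] {V : Ω → ℝ}

lemma set_lower (hV : Integrable V P) {A : Set Ω} (hA : MeasurableSet A) {a : ℝ}
    (h : ∀ᵐ ω ∂P, ω ∈ A → a ≤ V ω) : a * P.real A ≤ ∫ ω in A, V ω ∂P := by
  have : ∫ ω in A, a ∂P ≤ ∫ ω in A, V ω ∂P :=
    setIntegral_mono_on_ae (integrable_const a).integrableOn hV.integrableOn hA h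
  rwa [setIntegral_const, smul_eq_mul, mul_comm] at this

lemma set_upper (hV : Integrable V P) {A : Set Ω} (hA : MeasurableSet A) {a : ℝ}
    (h : ∀ᵐ ω ∂P, ω ∈ A → V ω ≤ a) : ∫ ω in A, V ω ∂P ≤ a * P.real A := by
  have : ∫ ω in A, V ω ∂P ≤ ∫ ω in A, a ∂P :=
    setIntegral_mono_on_ae hV.integrableOn (integrable_const a).integrableOn hA h
  rwa [setIntegral_const, smul_eq_mul, mul_comm] at this

lemma mset_gt (hVm : Measurable V) (y : ℝ) : MeasurableSet {ω | V ω > y} :=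
  measurableSet_lt measurable_const hVm

lemma mset_le (hVm : Measurable V) (y : ℝ) : MeasurableSet {ω | V ω ≤ y} :=
  measurableSet_le hVm measurable_const

lemma compl_gt_set (y : ℝ) : {ω | V ω > y}ᶜ = {ω | V ω ≤ y} := by
  ext ω; simp

lemma Pip_add_Pim (hVm : Measurable V) (y : ℝ) : Pip P V y + Pim P V y = 1 := by
  have := probReal_add_probReal_compl (μ := P) (mset_gt hVm y)
  rwa [compl_gt_set] at this

lemma Phip_add_Phim (hVm : Measurable V) (hV : Integrable V P) (y : ℝ) :
    Phip P V y + Phim P V y = ∫ ω, V ω ∂P := by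
  have := integral_add_compl (mset_gt hVm y) hV
  rwa [compl_gt_set] at this

lemma gt_split (hVm : Measurable V) (hV : Integrable V P) {y y' : ℝ} (h : y ≤ y') :
    Phip P V y = Phip P V y' + ∫ ω in {ω | y < V ω ∧ V ω ≤ y'}, V ω ∂P ∧
    Pip P V y = Pip P V y' + P.real {ω | y < V ω ∧ V ω ≤ y'} := by
  have hu : {ω | V ω > y} = {ω | V ω > y'} ∪ {ω | y < V ω ∧ V ω ≤ y'} := by
    ext ω
    simp only [mem_ofPred_eq, mem_union]
    constructor
    · intro hw
      rcases lt_or_ge y' (V ω) with h1 | h1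
      · exact Or.inl h1
      · exact Or.inr ⟨hw, h1⟩
    · rintro (h1 | h1)
      · exact lt_of_le_of_lt h h1
      · exact h1.1
  have hd : Disjoint {ω | V ω > y'} {ω | y < V ω ∧ V ω ≤ y'} := by
    rw [Set.disjoint_left]
    intro ω h1 h2
    exact absurd h1 (not_lt.2 h2.2)
  have hm : MeasurableSet {ω | y < V ω ∧ V ω ≤ y'} := (mset_gt hVm y).inter (mset_le hVm y')
  constructor
  · unfold Phip
    rw [hu, setIntegral_union hd hm hV.integrableOn hV.integrableOn]
  · unfold Pip
    rw [hu]
    exact measureReal_union hd hm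

variable {m M : ℝ}

lemma Phip_lower (hVm : Measurable V) (hV : Integrable V P) (hs : SuppIoo P V m M) (y : ℝ) :
    m * Pip P V y ≤ Phip P V y :=
  set_lower hV (mset_gt hVm y) (hs.2.1.mono fun _ h _ => h.1)

lemma Phip_upper (hVm : Measurable V) (hV : Integrable V P) (hs : SuppIoo P V m M) (y : ℝ) :
    Phip P V y ≤ M * Pip P V y :=
  set_upper hV (mset_gt hVm y) (hs.2.1.mono fun _ h _ => h.2)

lemma Phim_lower (hVm : Measurable V) (hV : Integrable V P) (hs : SuppIoo P V m M) (y : ℝ) :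
    m * Pim P V y ≤ Phim P V y :=
  set_lower hV (mset_le hVm y) (hs.2.1.mono fun _ h _ => h.1)

lemma Phim_upper (hVm : Measurable V) (hV : Integrable V P) (hs : SuppIoo P V m M) (y : ℝ) :
    Phim P V y ≤ M * Pim P V y :=
  set_upper hV (mset_le hVm y) (hs.2.1.mono fun _ h _ => h.2)

lemma Phip_lower_self (hVm : Measurable V) (hV : Integrable V P) (y : ℝ) :
    y * Pip P V y ≤ Phip P V y :=
  set_lower hV (mset_gt hVm y) (Eventually.of_forall fun _ h => le_of_lt h)

lemma Phim_upper_self (hVm : Measurable V) (hV : Integrable V P) (y : ℝ) :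
    Phim P V y ≤ y * Pim P V y :=
  set_upper hV (mset_le hVm y) (Eventually.of_forall fun _ h => h)

lemma Pip_nonneg (y : ℝ) : 0 ≤ Pip P V y := ENNReal.toReal_nonneg
lemma Pim_nonneg (y : ℝ) : 0 ≤ Pim P V y := ENNReal.toReal_nonneg

lemma Pip_pos (hs : SuppIoo P V m M) {y : ℝ} (hy : y < M) : 0 < Pip P V y :=
  ENNReal.toReal_pos (hs.2.2.1 y hy).ne' (measure_ne_top _ _)

lemma Pim_pos (hs : SuppIoo P V m M) {y : ℝ} (hy : m < y) : 0 < Pim P V y :=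
  ENNReal.toReal_pos (hs.2.2.2 y hy).ne' (measure_ne_top _ _)

lemma Pip_le_one (hVm : Measurable V) (y : ℝ) : Pip P V y ≤ 1 := by
  have := Pip_add_Pim (P := P) hVm y
  have := Pim_nonneg (P := P) (V := V) y
  linarith

lemma Pim_le_one (hVm : Measurable V) (y : ℝ) : Pim P V y ≤ 1 := by
  have := Pip_add_Pim (P := P) hVm y
  have := Pip_nonneg (P := P) (V := V) y
  linarith

lemma Phi_mean (hVm : Measurable V) (hV : Integrable V P) (y : ℝ) :
    (∫ ω, V ω ∂P) * Pip P V y ≤ Phip P V y ∧ Phim P V y ≤ (∫ ω, V ω ∂P) * Pim P V y := by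
  have h1 := Pip_add_Pim (P := P) hVm y
  have h2 := Phip_add_Phim hVm hV y
  have h3 := Phip_lower_self hVm hV y
  have h4 := Phim_upper_self hVm hV y
  have h5 := Pip_nonneg (P := P) (V := V) y
  have h6 := Pim_nonneg (P := P) (V := V) y
  set e := ∫ ω, V ω ∂P
  have h7 : e * Pip P V y + e * Pim P V y = e := by rw [← mul_add, h1, mul_one]
  rcases le_total y e with h | h
  · have : Phim P V y ≤ e * Pim P V y := h4.trans (mul_le_mul_of_nonneg_right h h6)
    exact ⟨by linarith, this⟩
  · have : e * Pip P V y ≤ Phip P V y := (mul_le_mul_of_nonneg_right h h5).trans h3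
    exact ⟨this, by linarith⟩

lemma mean_mem (hVm : Measurable V) (hV : Integrable V P) (hs : SuppIoo P V m M) :
    (∫ ω, V ω ∂P) ∈ Ioo m M := by
  have hmM := hs.1
  obtain ⟨y, hy1, hy2⟩ := exists_between hmM
  have h1 := Pip_add_Pim (P := P) hVm y
  have h2 := Phip_add_Phim hVm hV y
  have h3 := Phip_lower_self hVm hV y
  have h4 := Phim_upper_self hVm hV y
  have h5 := Pip_pos hs hy2
  have h6 := Pim_pos hs hy1
  have h7 := Phim_lower hVm hV hs y
  have h8 := Phip_upper hVm hV hs y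
  have e1 : 0 < (y - m) * Pip P V y := mul_pos (by linarith) h5
  have e2 : 0 < (M - y) * Pim P V y := mul_pos (by linarith) h6
  have e3 : Pim P V y = 1 - Pip P V y := by linarith
  rw [e3] at h4 h7 e2
  constructor <;> nlinarith

lemma Phip_strict (hVm : Measurable V) (hV : Integrable V P) (hs : SuppIoo P V m M) {y : ℝ}
    (hy : y < M) : y * Pip P V y < Phip P V y := by
  obtain ⟨w, hw1, hw2⟩ := exists_between hy
  obtain ⟨h1, h2⟩ := gt_split hVm hV hw1.le
  have h3 := Phip_lower_self hVm hV w
  have h4 : y * P.real {ω | y < V ω ∧ V ω ≤ w} ≤ ∫ ω in {ω | y < V ω ∧ V ω ≤ w}, V ω ∂P :=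
    set_lower hV ((mset_gt hVm y).inter (mset_le hVm w)) (Eventually.of_forall fun _ h => h.1.le)
  have h5 := Pip_pos hs hw2
  rw [h1, h2]
  nlinarith

lemma Phim_strict (hVm : Measurable V) (hV : Integrable V P) (hs : SuppIoo P V m M) {y : ℝ}
    (hy : m < y) : Phim P V y < y * Pim P V y := by
  obtain ⟨w, hw1, hw2⟩ := exists_between hy
  obtain ⟨h1, h2⟩ := gt_split hVm hV hw2.le
  have h3 := Phim_upper_self hVm hV w
  have h4 : ∫ ω in {ω | w < V ω ∧ V ω ≤ y}, V ω ∂P ≤ y * P.real {ω | w < V ω ∧ V ω ≤ y} :=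
    set_upper hV ((mset_gt hVm w).inter (mset_le hVm y)) (Eventually.of_forall fun _ h => h.2)
  have h5 := Pim_pos hs hw1
  have a1 := Pip_add_Pim (P := P) hVm w
  have a2 := Pip_add_Pim (P := P) hVm y
  have a3 := Phip_add_Phim hVm hV w
  have a4 := Phip_add_Phim hVm hV y
  have a5 : Pim P V y = Pim P V w + P.real {ω | w < V ω ∧ V ω ≤ y} := by linarith
  rw [a5]
  nlinarith

lemma Pim_continuous (hVm : Measurable V) (hc : Continuous (Pip P V)) :
    Continuous (Pim P V) := by
  have : Pim P V = fun y => 1 - Pip P V y := by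
    ext y; have := Pip_add_Pim (P := P) hVm y; linarith
  rw [this]; fun_prop

/-- bound on `|V|` -/
lemma abs_mem {m M v : ℝ} (h : v ∈ Icc m M) : |v| ≤ |m| + |M| := by
  rw [abs_le]
  have := neg_abs_le m
  have := le_abs_self M
  have := abs_nonneg m
  have := abs_nonneg M
  constructor <;> linarith [h.1, h.2]

lemma Phip_continuous (hVm : Measurable V) (hV : Integrable V P) (hs : SuppIoo P V m M)
    (hc : Continuous (Pip P V)) : Continuous (Phip P V) := by
  have hb : ∀ y y', y ≤ y' →
      |Phip P V y - Phip P V y'| ≤ (|m| + |M|) * |Pip P V y - Pip P V y'| := by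
    intro y y' h
    obtain ⟨h1, h2⟩ := gt_split hVm hV h
    have hA : MeasurableSet {ω | y < V ω ∧ V ω ≤ y'} := (mset_gt hVm y).inter (mset_le hVm y')
    have h3 := set_lower hV hA (hs.2.1.mono fun _ h _ => (abs_le.1 (abs_mem h)).1)
    have h4 := set_upper hV hA (hs.2.1.mono fun _ h _ => (abs_le.1 (abs_mem h)).2)
    rw [h1, h2, add_sub_cancel_left, add_sub_cancel_left, abs_of_nonneg measureReal_nonneg, abs_le]
    constructor <;> linarith
  have hb' : ∀ y y', |Phip P V y - Phip P V y'| ≤ (|m| + |M|) * |Pip P V y - Pip P V y'| := by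
    intro y y'
    rcases le_total y y' with h | h
    · exact hb y y' h
    · rw [abs_sub_comm, abs_sub_comm (Pip P V y)]; exact hb y' y h
  rw [continuous_iff_continuousAt]
  intro y
  refine tendsto_iff_norm_sub_tendsto_zero.2 ?_
  refine squeeze_zero (g := fun x => (|m| + |M|) * |Pip P V x - Pip P V y|)
    (fun _ => norm_nonneg _) (fun x => hb' x y) ?_
  have : Continuous fun x => (|m| + |M|) * |Pip P V x - Pip P V y| := by fun_prop
  have := this.tendsto y
  simpa using this

lemma Phim_continuous (hVm : Measurable V) (hV : Integrable V P) (hs : SuppIoo P V m M)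
    (hc : Continuous (Pip P V)) : Continuous (Phim P V) := by
  have h := Phip_continuous hVm hV hs hc
  have : Phim P V = fun y => (∫ ω, V ω ∂P) - Phip P V y := by
    ext y; have := Phip_add_Phim hVm hV y; linarith
  rw [this]; fun_prop

lemma Phip_abs (hVm : Measurable V) (hV : Integrable V P) (hs : SuppIoo P V m M) (y : ℝ) :
    |Phip P V y| ≤ |m| + |M| := by
  have h1 := Phip_lower hVm hV hs y
  have h2 := Phip_upper hVm hV hs y
  have h3 := Pip_nonneg (P := P) (V := V) y
  have h4 := Pip_le_one (P := P) hVm y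
  have := neg_abs_le m
  have := le_abs_self M
  have := abs_nonneg m
  have := abs_nonneg M
  rw [abs_le]
  constructor <;> nlinarith

lemma Phim_abs (hVm : Measurable V) (hV : Integrable V P) (hs : SuppIoo P V m M) (y : ℝ) :
    |Phim P V y| ≤ |m| + |M| := by
  have h1 := Phim_lower hVm hV hs y
  have h2 := Phim_upper hVm hV hs y
  have h3 := Pim_nonneg (P := P) (V := V) y
  have h4 := Pim_le_one (P := P) hVm y
  have := neg_abs_le m
  have := le_abs_self M
  have := abs_nonneg m
  have := abs_nonneg M
  rw [abs_le]
  constructor <;> nlinarith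

lemma Pip_abs (hVm : Measurable V) (y : ℝ) : |Pip P V y| ≤ 1 := by
  rw [abs_of_nonneg (Pip_nonneg y)]; exact Pip_le_one hVm y

lemma Pim_abs (hVm : Measurable V) (y : ℝ) : |Pim P V y| ≤ 1 := by
  rw [abs_of_nonneg (Pim_nonneg y)]; exact Pim_le_one hVm y

/-! ### The functions `φ_g` -/

lemma phip_eq (σ : ℝ) (g : ℝ → ℝ) (x : ℝ) :
    phip P V σ g x = Hc σ (fun z => Phip P V (g z)) x / Hc σ (fun z => Pip P V (g z)) x := by
  unfold phip Hc
  simp_rw [mul_comm]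

lemma phim_eq (σ : ℝ) (g : ℝ → ℝ) (x : ℝ) :
    phim P V σ g x = Hc σ (fun z => Phim P V (g z)) x / Hc σ (fun z => Pim P V (g z)) x := by
  unfold phim Hc
  simp_rw [mul_comm]

/-- Admissible functions. -/
def Adm (m M : ℝ) (g : ℝ → ℝ) : Prop := Continuous g ∧ g 0 ∈ Ioo m M

variable {σ : ℝ} {g : ℝ → ℝ}

lemma den_p_pos (hVm : Measurable V) (hs : SuppIoo P V m M)
    (hc : Continuous (Pip P V)) (hσ : 0 < σ) (hg : Adm m M g) (x : ℝ) :
    0 < Hc σ (fun z => Pip P V (g z)) x :=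
  Hc_pos hσ (hc.comp hg.1) (fun z => Pip_abs hVm (g z)) (fun z => Pip_nonneg _) 0
    (Pip_pos hs hg.2.2) x

lemma den_m_pos (hVm : Measurable V) (hs : SuppIoo P V m M)
    (hc : Continuous (Pip P V)) (hσ : 0 < σ) (hg : Adm m M g) (x : ℝ) :
    0 < Hc σ (fun z => Pim P V (g z)) x :=
  Hc_pos hσ ((Pim_continuous hVm hc).comp hg.1) (fun z => Pim_abs hVm (g z))
    (fun z => Pim_nonneg _) 0 (Pim_pos hs hg.2.1) x

lemma ratio_bounds {A B : ℝ → ℝ} {a b C D : ℝ} (hσ : 0 < σ) (hA : Measurable A)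
    (hB : Measurable B) (hCA : ∀ z, |A z| ≤ C) (hCB : ∀ z, |B z| ≤ D)
    (h1 : ∀ z, a * B z ≤ A z) (h2 : ∀ z, A z ≤ b * B z) (x : ℝ) (hpos : 0 < Hc σ B x) :
    Hc σ A x / Hc σ B x ∈ Icc a b := by
  have hbd : ∀ c z, |c * B z| ≤ |c| * D := fun c z => by
    rw [abs_mul]; exact mul_le_mul_of_nonneg_left (hCB z) (abs_nonneg c)
  constructor
  · rw [le_div_iff₀ hpos, ← Hc_const_mul]
    exact Hc_mono hσ (hB.const_mul a) hA (hbd a) hCA h1 x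
  · rw [div_le_iff₀ hpos, ← Hc_const_mul]
    exact Hc_mono hσ hA (hB.const_mul b) hCA (hbd b) h2 x

lemma phip_mem (hVm : Measurable V) (hV : Integrable V P) (hs : SuppIoo P V m M)
    (hc : Continuous (Pip P V)) (hσ : 0 < σ) (hg : Adm m M g) (x : ℝ) :
    phip P V σ g x ∈ Icc (∫ ω, V ω ∂P) M := by
  rw [phip_eq]
  exact ratio_bounds hσ ((Phip_continuous hVm hV hs hc).comp hg.1).measurable
    (hc.comp hg.1).measurable (fun z => Phip_abs hVm hV hs _) (fun z => Pip_abs hVm _)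
    (fun z => (Phi_mean hVm hV _).1) (fun z => Phip_upper hVm hV hs _) x
    (den_p_pos hVm hs hc hσ hg x)

lemma phim_mem (hVm : Measurable V) (hV : Integrable V P) (hs : SuppIoo P V m M)
    (hc : Continuous (Pip P V)) (hσ : 0 < σ) (hg : Adm m M g) (x : ℝ) :
    phim P V σ g x ∈ Icc m (∫ ω, V ω ∂P) := by
  rw [phim_eq]
  exact ratio_bounds hσ ((Phim_continuous hVm hV hs hc).comp hg.1).measurable
    ((Pim_continuous hVm hc).comp hg.1).measurable (fun z => Phim_abs hVm hV hs _)
    (fun z => Pim_abs hVm _)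
    (fun z => Phim_lower hVm hV hs _) (fun z => (Phi_mean hVm hV _).2) x
    (den_m_pos hVm hs hc hσ hg x)

lemma phig_mem (hVm : Measurable V) (hV : Integrable V P) (hs : SuppIoo P V m M)
    (hc : Continuous (Pip P V)) (hσ : 0 < σ) (hg : Adm m M g) (x : ℝ) :
    phig P V σ g x ∈ Icc m M := by
  have he := mean_mem hVm hV hs
  have h1 := phip_mem hVm hV hs hc hσ hg x
  have h2 := phim_mem hVm hV hs hc hσ hg x
  unfold phig
  split_ifs
  · exact ⟨he.1.le.trans h1.1, h1.2⟩
  · exact ⟨h2.1, h2.2.trans he.2.le⟩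

lemma phig_abs (hVm : Measurable V) (hV : Integrable V P) (hs : SuppIoo P V m M)
    (hc : Continuous (Pip P V)) (hσ : 0 < σ) (hg : Adm m M g) (x : ℝ) :
    |phig P V σ g x| ≤ |m| + |M| := abs_mem (phig_mem hVm hV hs hc hσ hg x)

lemma phig_meas (hVm : Measurable V) (hV : Integrable V P) (hs : SuppIoo P V m M)
    (hc : Continuous (Pip P V)) (hσ : 0 < σ) (hg : Continuous g) :
    Measurable (phig P V σ g) := by
  have h1 : Measurable (phip P V σ g) := by
    rw [funext (phip_eq σ g)]
    exact (Hc_continuous hσ ((Phip_continuous hVm hV hs hc).comp hg).measurable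
      (fun z => Phip_abs hVm hV hs _)).measurable.div
      (Hc_continuous hσ (hc.comp hg).measurable (fun z => Pip_abs hVm _)).measurable
  have h2 : Measurable (phim P V σ g) := by
    rw [funext (phim_eq σ g)]
    exact (Hc_continuous hσ ((Phim_continuous hVm hV hs hc).comp hg).measurable
      (fun z => Phim_abs hVm hV hs _)).measurable.div
      (Hc_continuous hσ ((Pim_continuous hVm hc).comp hg).measurable
        (fun z => Pim_abs hVm _)).measurable
  exact Measurable.ite measurableSet_Ici h1 h2

lemma phig_tendsto (hVm : Measurable V) (hV : Integrable V P) (hs : SuppIoo P V m M)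
    (hc : Continuous (Pip P V)) (hσ : 0 < σ) (hg : Adm m M g) {f : ℕ → ℝ → ℝ}
    (hf : ∀ n, Continuous (f n)) (h : ∀ z, Tendsto (fun n => f n z) atTop (nhds (g z))) (x : ℝ) :
    Tendsto (fun n => phig P V σ (f n) x) atTop (nhds (phig P V σ g x)) := by
  have c1 := Phip_continuous hVm hV hs hc
  have c2 := Phim_continuous hVm hV hs hc
  have c3 := Pim_continuous hVm hc
  unfold phig
  split_ifs
  · simp_rw [phip_eq]
    refine Tendsto.div ?_ ?_ (den_p_pos hVm hs hc hσ hg x).ne'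
    · exact Hc_tendsto hσ (Eventually.of_forall fun n => (c1.comp (hf n)).measurable)
        (Eventually.of_forall fun n z => Phip_abs hVm hV hs _) (fun z => (c1.tendsto _).comp (h z)) x
    · exact Hc_tendsto hσ (Eventually.of_forall fun n => (hc.comp (hf n)).measurable)
        (Eventually.of_forall fun n z => Pip_abs hVm _) (fun z => (hc.tendsto _).comp (h z)) x
  · simp_rw [phim_eq]
    refine Tendsto.div ?_ ?_ (den_m_pos hVm hs hc hσ hg x).ne'
    · exact Hc_tendsto hσ (Eventually.of_forall fun n => (c2.comp (hf n)).measurable)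
        (Eventually.of_forall fun n z => Phim_abs hVm hV hs _) (fun z => (c2.tendsto _).comp (h z)) x
    · exact Hc_tendsto hσ (Eventually.of_forall fun n => (c3.comp (hf n)).measurable)
        (Eventually.of_forall fun n z => Pim_abs hVm _) (fun z => (c3.tendsto _).comp (h z)) x

end law

/-! ### Compactness -/

lemma lip_compact {f : ℕ → ℝ → ℝ} {m M K : ℝ} (hf : ∀ n x, f n x ∈ Icc m M)
    (hK : ∀ n x y, |f n x - f n y| ≤ K * |x - y|) :
    ∃ φ : ℕ → ℕ, StrictMono φ ∧ ∃ G : ℝ → ℝ, ∀ x,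
      Tendsto (fun n => f (φ n) x) atTop (nhds (G x)) := by
  have hcomp : IsCompact (Set.pi univ (fun _ : ℚ => Icc m M)) :=
    isCompact_univ_pi fun _ => isCompact_Icc
  obtain ⟨G0, -, φ, hφ, hG0⟩ := hcomp.tendsto_subseq
    (x := fun n => (fun r : ℚ => f n (r : ℝ))) (fun n r _ => hf n r)
  rw [tendsto_pi_nhds] at hG0
  refine ⟨φ, hφ, ?_⟩
  have hK0 : 0 ≤ K := by
    have := (abs_nonneg _).trans (hK 0 1 0); simpa using this
  have hex : ∀ x, ∃ L, Tendsto (fun n => f (φ n) x) atTop (nhds L) := by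
    intro x
    apply cauchySeq_tendsto_of_complete
    rw [Metric.cauchySeq_iff]
    intro ε hε
    obtain ⟨r, hr1, hr2⟩ := exists_rat_btwn (show x < x + ε / (4 * (K + 1)) by
      have : 0 < ε / (4 * (K + 1)) := by positivity
      linarith)
    have hr : K * |x - r| ≤ ε / 4 := by
      rw [abs_sub_comm, abs_of_pos (by linarith)]
      have h1 : (r : ℝ) - x ≤ ε / (4 * (K + 1)) := by linarith
      calc K * (r - x) ≤ (K + 1) * (ε / (4 * (K + 1))) := by
            apply mul_le_mul (by linarith) h1 (by linarith) (by linarith)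
        _ = ε / 4 := by field_simp
    have hcs := (hG0 r).cauchySeq
    rw [Metric.cauchySeq_iff] at hcs
    obtain ⟨N, hN⟩ := hcs (ε / 4) (by positivity)
    refine ⟨N, fun k hk l hl => ?_⟩
    have h1 := hN k hk l hl
    simp only [Function.comp, Real.dist_eq] at h1
    have h2 := hK (φ k) x r
    have h3 := hK (φ l) x r
    rw [Real.dist_eq]
    rw [abs_lt] at h1 ⊢
    rw [abs_le] at h2 h3
    constructor <;> linarith [h1.1, h1.2, h2.1, h2.2, h3.1, h3.2]
  exact ⟨fun x => (hex x).choose, fun x => (hex x).choose_spec⟩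

section main

set_option linter.unusedSectionVars false
set_option linter.unusedVariables false

variable {Ω : Type*} [MeasurableSpace Ω] {P : Measure Ω} [IsProbabilityMeasure P] {V : Ω → ℝ}
  {m M σ : ℝ} {g : ℝ → ℝ}

lemma solvesEInf_iff (g : ℝ → ℝ) :
    SolvesEInf P V σ g ↔ ∀ x, g x = Av (Hc σ (phig P V σ g)) x := by
  have h0 : Hc σ (phig P V σ g) 0 = ∫ z, gq σ z * phig P V σ g z := by
    unfold Hc; simp [gq_neg]
  constructor
  · rintro ⟨h1, h2⟩ x
    by_cases hx : x = 0
    · subst hx; rw [Av_zero, h0, h2]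
    · rw [Av_eq _ _ hx, h1 x hx]; rfl
  · intro h
    refine ⟨fun x hx => ?_, ?_⟩
    · rw [h x, Av_eq _ _ hx]; rfl
    · rw [h 0, Av_zero, h0]

lemma solvesE_eq (hVm : Measurable V) (hV : Integrable V P) (hs : SuppIoo P V m M)
    (hc : Continuous (Pip P V)) (hσ : 0 < σ) (hg : Adm m M g) {N : ℕ} (h : SolvesE P V σ N g)
    (x : ℝ) : g x = (1 / (N:ℝ)) * Hc σ (phig P V σ g) x
      + (((N:ℝ) - 1) / (N:ℝ)) * Av (Hc σ (phig P V σ g)) x := by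
  rw [h x]
  exact solvesE_rhs hσ (phig_meas hVm hV hs hc hσ hg.1) (phig_abs hVm hV hs hc hσ hg) x _ _

lemma bump_abs (z : ℝ) : |min 1 (max 0 z)| ≤ 1 := by
  rw [abs_of_nonneg (le_min zero_le_one (le_max_left _ _))]
  exact min_le_left _ _

lemma bump_pos {σ : ℝ} (hσ : 0 < σ) (s : ℝ) (hs : s * s = 1) (y : ℝ) :
    0 < Hc σ (fun z => min 1 (max 0 (s * z))) y := by
  refine Hc_pos hσ (by fun_prop) (C := 1) (fun z => bump_abs _)
    (fun z => le_min zero_le_one (le_max_left _ _)) s ?_ y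
  rw [hs]; simp

lemma Hc_affine {σ : ℝ} (hσ : 0 < σ) {f : ℝ → ℝ} (hf : Measurable f) {C : ℝ}
    (hC : ∀ z, |f z| ≤ C) (a b y : ℝ) :
    Hc σ (fun z => a + b * f z) y = a + b * Hc σ f y := by
  have h1 := (gq_sub_integrable σ hσ y).mul_const a
  have h2 := (Hc_integrable hσ hf hC y).const_mul b
  calc Hc σ (fun z => a + b * f z) y
      = ∫ z, (gq σ (y - z) * a + b * (gq σ (y - z) * f z)) := by
        unfold Hc; congr 1; ext z; ring
    _ = a + b * Hc σ f y := by
        rw [integral_add h1 h2, integral_mul_const, gq_sub_integral σ hσ, integral_const_mul,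
          one_mul]; rfl

lemma Hphi_bounds (hVm : Measurable V) (hV : Integrable V P) (hs : SuppIoo P V m M)
    (hc : Continuous (Pip P V)) (hσ : 0 < σ) (hg : Adm m M g) (y : ℝ) :
    m + ((∫ ω, V ω ∂P) - m) * Hc σ (fun z => min 1 (max 0 (1 * z))) y ≤ Hc σ (phig P V σ g) y ∧
    Hc σ (phig P V σ g) y ≤
      M + ((∫ ω, V ω ∂P) - M) * Hc σ (fun z => min 1 (max 0 (-1 * z))) y := by
  have he := mean_mem hVm hV hs
  set e := ∫ ω, V ω ∂P with hedef
  have hm := phig_meas hVm hV hs hc hσ hg.1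
  have hb := phig_abs hVm hV hs hc hσ hg
  have bm : ∀ s : ℝ, Measurable (fun z : ℝ => min 1 (max 0 (s * z))) := fun s =>
    Continuous.measurable (by fun_prop)
  have hbd : ∀ a b s z : ℝ, |a + b * min 1 (max 0 (s * z))| ≤ |a| + |b| := by
    intro a b s z
    refine (abs_add_le _ _).trans ?_
    rw [abs_mul]
    have := mul_le_mul_of_nonneg_left (bump_abs (s * z)) (abs_nonneg b)
    linarith
  constructor
  · rw [← Hc_affine hσ (bm 1) (fun z => bump_abs _)]
    refine Hc_mono hσ (((bm 1).const_mul _).const_add _) hm (hbd _ _ 1) hb ?_ y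
    intro z
    by_cases hz : 0 ≤ z
    · have h1 := (phip_mem hVm hV hs hc hσ hg z).1
      rw [phig, if_pos hz]
      refine le_trans ?_ h1
      rw [← hedef]
      have : min 1 (max 0 (1 * z)) ≤ 1 := min_le_left _ _
      nlinarith [he.1]
    · have : max 0 (1 * z) = 0 := max_eq_left (by linarith)
      rw [this]
      have := (phig_mem hVm hV hs hc hσ hg z).1
      simpa using this
  · rw [← Hc_affine hσ (bm (-1)) (fun z => bump_abs _)]
    refine Hc_mono hσ hm (((bm (-1)).const_mul _).const_add _) hb (hbd _ _ (-1)) ?_ y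
    intro z
    by_cases hz : 0 ≤ z
    · have : max 0 (-1 * z) = 0 := max_eq_left (by linarith)
      rw [this]
      have := (phig_mem hVm hV hs hc hσ hg z).2
      simpa using this
    · have h1 := (phim_mem hVm hV hs hc hσ hg z).2
      rw [phig, if_neg hz]
      refine le_trans h1 ?_
      rw [← hedef]
      have : min 1 (max 0 (-1 * z)) ≤ 1 := min_le_left _ _
      nlinarith [he.2]

/-- The Lipschitz constant. -/
noncomputable def LK (m M σ : ℝ) : ℝ := (|m| + |M|) * gK σ

lemma Hphi_lip (hVm : Measurable V) (hV : Integrable V P) (hs : SuppIoo P V m M)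
    (hc : Continuous (Pip P V)) (hσ : 0 < σ) (hg : Adm m M g) (x y : ℝ) :
    |Hc σ (phig P V σ g) x - Hc σ (phig P V σ g) y| ≤ LK m M σ * |x - y| :=
  Hc_lip hσ (phig_meas hVm hV hs hc hσ hg.1) (phig_abs hVm hV hs hc hσ hg) x y

lemma Hphi_cont (hVm : Measurable V) (hV : Integrable V P) (hs : SuppIoo P V m M)
    (hc : Continuous (Pip P V)) (hσ : 0 < σ) (hg : Adm m M g) :
    Continuous (Hc σ (phig P V σ g)) :=
  Hc_continuous hσ (phig_meas hVm hV hs hc hσ hg.1) (phig_abs hVm hV hs hc hσ hg)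

lemma solE_lip (hVm : Measurable V) (hV : Integrable V P) (hs : SuppIoo P V m M)
    (hc : Continuous (Pip P V)) (hσ : 0 < σ) (hg : Adm m M g) {N : ℕ} (hN : 1 ≤ N)
    (h : SolvesE P V σ N g) (x y : ℝ) : |g x - g y| ≤ LK m M σ * |x - y| := by
  rw [solvesE_eq hVm hV hs hc hσ hg h x, solvesE_eq hVm hV hs hc hσ hg h y]
  have h1 := Hphi_lip hVm hV hs hc hσ hg
  have h2 := Av_lip (Hphi_cont hVm hV hs hc hσ hg) h1 x y
  have h1 := h1 x y
  have hN' : (1:ℝ) ≤ N := by exact_mod_cast hN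
  have ha : 0 ≤ 1 / (N:ℝ) := by positivity
  have hb : 0 ≤ ((N:ℝ) - 1) / N := div_nonneg (by linarith) (by linarith)
  have hab : 1 / (N:ℝ) + ((N:ℝ) - 1) / N = 1 := by field_simp; ring
  generalize 1 / (N:ℝ) = a at *
  generalize ((N:ℝ) - 1) / N = b at *
  have hb' : b = 1 - a := by linarith
  rw [abs_le] at h1 h2 ⊢
  subst hb'
  constructor
  · nlinarith [mul_le_mul_of_nonneg_left h1.1 ha, mul_le_mul_of_nonneg_left h2.1 hb]
  · nlinarith [mul_le_mul_of_nonneg_left h1.2 ha, mul_le_mul_of_nonneg_left h2.2 hb]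

lemma core_compact (hVm : Measurable V) (hV : Integrable V P) (hs : SuppIoo P V m M)
    (hc : Continuous (Pip P V)) (hσ : 0 < σ) {F : ℕ → ℝ → ℝ}
    (hF : ∀ N : ℕ, 1 ≤ N → Continuous (F N) ∧ Monotone (F N) ∧
      (∀ x, F N x ∈ Set.Ioo m M) ∧ SolvesE P V σ N (F N))
    {ns : ℕ → ℕ} (hns : Tendsto ns atTop atTop) :
    ∃ ms : ℕ → ℕ, ∃ G : ℝ → ℝ, Continuous G ∧ Monotone G ∧ (∀ x, G x ∈ Ioo m M) ∧
      SolvesEInf P V σ G ∧ ∀ x, Tendsto (fun n => F (ns (ms n)) x) atTop (nhds (G x)) := by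
  have he := mean_mem hVm hV hs
  have hadm : ∀ N, 1 ≤ N → Adm m M (F N) := fun N hN => ⟨(hF N hN).1, (hF N hN).2.2.1 0⟩
  have hmax : ∀ n, 1 ≤ max (ns n) 1 := fun n => le_max_right _ _
  obtain ⟨ms, hms, G, hG⟩ := lip_compact (f := fun n => F (max (ns n) 1)) (m := m) (M := M)
    (K := LK m M σ) (fun n x => Ioo_subset_Icc_self ((hF _ (hmax n)).2.2.1 x))
    (fun n x y => solE_lip hVm hV hs hc hσ (hadm _ (hmax n)) (hmax n) (hF _ (hmax n)).2.2.2 x y)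
  set k : ℕ → ℕ := fun n => max (ns (ms n)) 1 with hk
  have hk1 : ∀ n, 1 ≤ k n := fun n => le_max_right _ _
  have hkt : Tendsto k atTop atTop :=
    tendsto_atTop_mono (fun n => le_max_left _ _) (hns.comp hms.tendsto_atTop)
  have hG : ∀ x, Tendsto (fun n => F (k n) x) atTop (nhds (G x)) := hG
  have hKadm := fun n => hadm _ (hk1 n)
  have hLK : 0 ≤ LK m M σ := mul_nonneg (by positivity) (gK_pos σ hσ).le
  -- properties of G
  have hGmono : Monotone G := fun x y hxy =>
    le_of_tendsto_of_tendsto' (hG x) (hG y) fun n => (hF _ (hk1 n)).2.1 hxy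
  have hGlip : ∀ x y, |G x - G y| ≤ LK m M σ * |x - y| := fun x y =>
    le_of_tendsto' ((hG x).sub (hG y)).abs fun n =>
      solE_lip hVm hV hs hc hσ (hKadm n) (hk1 n) (hF _ (hk1 n)).2.2.2 x y
  have hGcont : Continuous G := by
    have : LipschitzWith (Real.toNNReal (LK m M σ)) G := by
      refine LipschitzWith.of_dist_le_mul fun x y => ?_
      rw [Real.coe_toNNReal _ hLK]
      exact hGlip x y
    exact this.continuous
  have hF0 : ∀ n, F (k n) 0 = Hc σ (phig P V σ (F (k n))) 0 := by
    intro n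
    have h := solvesE_eq hVm hV hs hc hσ (hKadm n) (hF _ (hk1 n)).2.2.2 0
    rw [Av_zero] at h
    rw [h]
    have hN' : (k n : ℝ) ≠ 0 := by
      have := hk1 n
      positivity
    field_simp
    ring
  have hG0 : G 0 ∈ Ioo m M := by
    constructor
    · have h1 : m + ((∫ ω, V ω ∂P) - m) * Hc σ (fun z => min 1 (max 0 (1 * z))) 0 ≤ G 0 :=
        ge_of_tendsto' (hG 0) fun n => by
          rw [hF0 n]; exact (Hphi_bounds hVm hV hs hc hσ (hKadm n) 0).1
      have := mul_pos (sub_pos.2 he.1) (bump_pos hσ 1 (by norm_num) 0)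
      linarith
    · have h1 : G 0 ≤ M + ((∫ ω, V ω ∂P) - M) * Hc σ (fun z => min 1 (max 0 (-1 * z))) 0 :=
        le_of_tendsto' (hG 0) fun n => by
          rw [hF0 n]; exact (Hphi_bounds hVm hV hs hc hσ (hKadm n) 0).2
      have := mul_pos (sub_pos.2 he.2) (bump_pos hσ (-1) (by norm_num) 0)
      linarith
  have hGadm : Adm m M G := ⟨hGcont, hG0⟩
  have hHt : ∀ y, Tendsto (fun n => Hc σ (phig P V σ (F (k n))) y) atTop
      (nhds (Hc σ (phig P V σ G) y)) :=
    Hc_tendsto hσ (Eventually.of_forall fun n => phig_meas hVm hV hs hc hσ (hKadm n).1)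
      (Eventually.of_forall fun n => phig_abs hVm hV hs hc hσ (hKadm n))
      (phig_tendsto hVm hV hs hc hσ hGadm (fun n => (hKadm n).1) hG)
  have hAt : ∀ x, Tendsto (fun n => Av (Hc σ (phig P V σ (F (k n)))) x) atTop
      (nhds (Av (Hc σ (phig P V σ G)) x)) :=
    Av_tendsto (Eventually.of_forall fun n => Hphi_cont hVm hV hs hc hσ (hKadm n))
      (Eventually.of_forall fun n => Hc_abs_le hσ (phig_meas hVm hV hs hc hσ (hKadm n).1)
        (phig_abs hVm hV hs hc hσ (hKadm n))) hHt
  have hinv : Tendsto (fun n => 1 / (k n : ℝ)) atTop (nhds 0) :=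
    tendsto_one_div_atTop_nhds_zero_nat.comp hkt
  have hGeq : ∀ x, G x = Av (Hc σ (phig P V σ G)) x := by
    intro x
    refine tendsto_nhds_unique (hG x) ?_
    have h1 := (hinv.mul (hHt x)).add (((tendsto_const_nhds (x := (1:ℝ))).sub hinv).mul (hAt x))
    rw [zero_mul, sub_zero, one_mul, zero_add] at h1
    refine h1.congr fun n => ?_
    rw [solvesE_eq hVm hV hs hc hσ (hKadm n) (hF _ (hk1 n)).2.2.2 x]
    have hN' : (k n : ℝ) ≠ 0 := by
      have := hk1 n
      positivity
    congr 2
    field_simp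
  have hHc := Hphi_cont hVm hV hs hc hσ hGadm
  have hGIoo : ∀ x, G x ∈ Ioo m M := by
    intro x
    have hcx : Continuous fun t => Hc σ (phig P V σ G) (x * t) := hHc.comp (by fun_prop)
    have hlow : ∀ y, m < Hc σ (phig P V σ G) y := fun y => by
      have := (Hphi_bounds hVm hV hs hc hσ hGadm y).1
      have := mul_pos (sub_pos.2 he.1) (bump_pos hσ 1 (by norm_num) y)
      linarith
    have hup : ∀ y, Hc σ (phig P V σ G) y < M := fun y => by
      have := (Hphi_bounds hVm hV hs hc hσ hGadm y).2
      have := mul_pos (sub_pos.2 he.2) (bump_pos hσ (-1) (by norm_num) y)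
      linarith
    rw [hGeq x]
    constructor
    · have := intervalIntegral.integral_lt_integral_of_continuousOn_of_le_of_exists_lt
        (a := (0:ℝ)) (b := 1) (f := fun _ => m) (g := fun t => Hc σ (phig P V σ G) (x * t))
        zero_lt_one continuousOn_const hcx.continuousOn (fun t _ => (hlow _).le)
        ⟨0, by simp, hlow _⟩
      simpa [Av] using this
    · have := intervalIntegral.integral_lt_integral_of_continuousOn_of_le_of_exists_lt
        (a := (0:ℝ)) (b := 1) (g := fun _ => M) (f := fun t => Hc σ (phig P V σ G) (x * t))
        zero_lt_one hcx.continuousOn continuousOn_const (fun t _ => (hup _).le)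
        ⟨0, by simp, hup _⟩
      simpa [Av] using this
  refine ⟨ms, G, hGcont, hGmono, hGIoo, (solvesEInf_iff G).2 hGeq, fun x => (hG x).congr' ?_⟩
  filter_upwards [(hns.comp hms.tendsto_atTop).eventually_ge_atTop 1] with n hn
  have : k n = ns (ms n) := max_eq_left hn
  rw [this]

/-! ### Limits at infinity -/

lemma G_lim (hVm : Measurable V) (hV : Integrable V P) (hs : SuppIoo P V m M)
    (hc : Continuous (Pip P V)) (hσ : 0 < σ) (hg : Adm m M g)
    (hsol : SolvesEInf P V σ g) {l : Filter ℝ} [l.IsCountablyGenerated] {L : ℝ}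
    (hl : ∀ t : ℝ, 0 < t → Tendsto (fun x => x * t) l l)
    (hl' : ∀ c : ℝ, Tendsto (fun x => x - c) l l)
    (h : Tendsto (phig P V σ g) l (nhds L)) : Tendsto g l (nhds L) := by
  rw [solvesEInf_iff] at hsol
  rw [funext hsol]
  have hm := phig_meas hVm hV hs hc hσ hg.1
  have hb := phig_abs hVm hV hs hc hσ hg
  exact Av_tendsto_lim (Hphi_cont hVm hV hs hc hσ hg) (Hc_abs_le hσ hm hb) hl
    (Hc_tendsto_lim hσ hm hb hl' h)

lemma G_exists_gt (hVm : Measurable V) (hV : Integrable V P) (hs : SuppIoo P V m M)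
    (hc : Continuous (Pip P V)) (hσ : 0 < σ) (hg : Continuous g) (hmono : Monotone g)
    (hI : ∀ x, g x ∈ Ioo m M) (hsol : SolvesEInf P V σ g) {v : ℝ} (hv : v < M) :
    ∃ b, v < g b := by
  by_contra hcon
  push Not at hcon
  have hbdd : BddAbove (range g) := ⟨v, by rintro _ ⟨x, rfl⟩; exact hcon x⟩
  have hlim := tendsto_atTop_ciSup hmono hbdd
  set L := ⨆ x, g x
  have hL : L < M := lt_of_le_of_lt (ciSup_le hcon) hv
  have hadm : Adm m M g := ⟨hg, hI 0⟩
  have c1 := Phip_continuous hVm hV hs hc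
  have hsh : ∀ c : ℝ, Tendsto (fun x : ℝ => x - c) atTop atTop := fun c =>
    tendsto_atTop_add_const_right _ (-c) tendsto_id
  have hden := Pip_pos hs hL
  have h1 : Tendsto (phip P V σ g) atTop (nhds (Phip P V L / Pip P V L)) := by
    rw [funext (phip_eq σ g)]
    refine Tendsto.div ?_ ?_ hden.ne'
    · exact Hc_tendsto_lim hσ (c1.comp hg).measurable (fun z => Phip_abs hVm hV hs _) hsh
        ((c1.tendsto _).comp hlim)
    · exact Hc_tendsto_lim hσ (hc.comp hg).measurable (fun z => Pip_abs hVm _) hsh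
        ((hc.tendsto _).comp hlim)
  have h2 : Tendsto (phig P V σ g) atTop (nhds (Phip P V L / Pip P V L)) := by
    refine h1.congr' ?_
    filter_upwards [eventually_ge_atTop 0] with x hx
    rw [phig, if_pos hx]
  have h3 := G_lim hVm hV hs hc hσ hadm hsol
    (fun t ht => tendsto_id.atTop_mul_const ht) hsh h2
  have h4 := tendsto_nhds_unique hlim h3
  have h5 := Phip_strict hVm hV hs hL
  rw [eq_div_iff hden.ne'] at h4
  linarith

lemma G_exists_lt (hVm : Measurable V) (hV : Integrable V P) (hs : SuppIoo P V m M)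
    (hc : Continuous (Pip P V)) (hσ : 0 < σ) (hg : Continuous g) (hmono : Monotone g)
    (hI : ∀ x, g x ∈ Ioo m M) (hsol : SolvesEInf P V σ g) {v : ℝ} (hv : m < v) :
    ∃ b, g b < v := by
  by_contra hcon
  push Not at hcon
  have hbdd : BddBelow (range g) := ⟨v, by rintro _ ⟨x, rfl⟩; exact hcon x⟩
  have hlim := tendsto_atBot_ciInf hmono hbdd
  set L := ⨅ x, g x
  have hL : m < L := lt_of_lt_of_le hv (le_ciInf hcon)
  have hadm : Adm m M g := ⟨hg, hI 0⟩
  have c1 := Phim_continuous hVm hV hs hc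
  have c2 := Pim_continuous hVm hc
  have hsh : ∀ c : ℝ, Tendsto (fun x : ℝ => x - c) atBot atBot := fun c =>
    tendsto_atBot_add_const_right _ (-c) tendsto_id
  have hden := Pim_pos hs hL
  have h1 : Tendsto (phim P V σ g) atBot (nhds (Phim P V L / Pim P V L)) := by
    rw [funext (phim_eq σ g)]
    refine Tendsto.div ?_ ?_ hden.ne'
    · exact Hc_tendsto_lim hσ (c1.comp hg).measurable (fun z => Phim_abs hVm hV hs _) hsh
        ((c1.tendsto _).comp hlim)
    · exact Hc_tendsto_lim hσ (c2.comp hg).measurable (fun z => Pim_abs hVm _) hsh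
        ((c2.tendsto _).comp hlim)
  have h2 : Tendsto (phig P V σ g) atBot (nhds (Phim P V L / Pim P V L)) := by
    refine h1.congr' ?_
    filter_upwards [eventually_lt_atBot 0] with x hx
    rw [phig, if_neg (not_le.2 hx)]
  have h3 := G_lim hVm hV hs hc hσ hadm hsol
    (fun t ht => tendsto_id.atBot_mul_const ht) hsh h2
  have h4 := tendsto_nhds_unique hlim h3
  have h5 := Phim_strict hVm hV hs hL
  rw [eq_div_iff hden.ne'] at h4
  linarith

end main

/-! ### Profit -/

lemma profit_bound {f : ℝ → ℝ} {K v X : ℝ} (hK : ∀ x y, |f x - f y| ≤ K * |x - y|)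
    (hv : f X = v) {N : ℕ} (hN : 1 ≤ N) :
    |X * N * ∫ y in (0:ℝ)..1, (v - f (X * y)) * y ^ (N - 1)| ≤ K * X ^ 2 / (N + 1) := by
  have hN' : (0:ℝ) < N := by exact_mod_cast hN
  have h1 : |∫ y in (0:ℝ)..1, (v - f (X * y)) * y ^ (N - 1)| ≤
      ∫ y in (0:ℝ)..1, K * |X| * (y ^ (N - 1) - y ^ N) := by
    rw [← Real.norm_eq_abs]
    refine intervalIntegral.norm_integral_le_of_norm_le zero_le_one ?_
      (Continuous.intervalIntegrable (by fun_prop) _ _)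
    filter_upwards with y hy
    have hp : y ^ N = y ^ (N - 1) * y := by
      rw [← pow_succ, Nat.sub_add_cancel hN]
    have hpn : 0 ≤ y ^ (N - 1) := pow_nonneg hy.1.le _
    rw [norm_mul, Real.norm_of_nonneg hpn, Real.norm_eq_abs, ← hv]
    have h2 := hK X (X * y)
    rw [show X - X * y = X * (1 - y) by ring, abs_mul, abs_of_nonneg (sub_nonneg.2 hy.2)] at h2
    rw [hp]
    calc |f X - f (X * y)| * y ^ (N - 1) ≤ (K * (|X| * (1 - y))) * y ^ (N - 1) :=
          mul_le_mul_of_nonneg_right h2 hpn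
      _ = _ := by ring
  have h2 : ∫ y in (0:ℝ)..1, K * |X| * (y ^ (N - 1) - y ^ N) =
      K * |X| * (1 / N - 1 / (N + 1)) := by
    rw [intervalIntegral.integral_const_mul, intervalIntegral.integral_sub
      (Continuous.intervalIntegrable (by fun_prop) _ _)
      (Continuous.intervalIntegrable (by fun_prop) _ _), integral_pow, integral_pow]
    have : ((N - 1 : ℕ) : ℝ) + 1 = N := by
      rw [Nat.cast_sub hN]; simp
    rw [this, Nat.sub_add_cancel hN]
    simp [show N ≠ 0 by omega]
  rw [h2] at h1
  rw [abs_mul, abs_mul, abs_of_pos hN']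
  calc |X| * N * |∫ y in (0:ℝ)..1, (v - f (X * y)) * y ^ (N - 1)|
      ≤ |X| * N * (K * |X| * (1 / N - 1 / (N + 1))) :=
        mul_le_mul_of_nonneg_left h1 (by positivity)
    _ = K * |X| ^ 2 / (N + 1) := by field_simp; ring
    _ = K * X ^ 2 / (N + 1) := by rw [sq_abs]

/-- If `Π⁺` is continuous, each equation (E) with parameter `N ≥ 1` has a unique
continuous nondecreasing solution `F_N` with values in `(m,M)`, and (E∞) has at most one such
solution, then `F_∞ = lim_N F_N` exists pointwise and solves (E∞); moreover the aggregate expected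
profit `π_N(v) = F_N⁻¹(v)·N·∫₀¹ (v − F_N(y·F_N⁻¹(v)))·y^{N−1} dy` tends to `0`. -/
theorem stmt10 {Ω : Type*} [MeasurableSpace Ω] (P : Measure Ω) [IsProbabilityMeasure P]
    (V : Ω → ℝ) (hVmeas : Measurable V) (hV : Integrable V P)
    (m M : ℝ) (hsupp : SuppIoo P V m M)
    (σ : ℝ) (hσ : 0 < σ)
    (hcont : Continuous (Pip P V))
    (F : ℕ → ℝ → ℝ)
    (hFsol : ∀ N : ℕ, 1 ≤ N → Continuous (F N) ∧ Monotone (F N) ∧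
      (∀ x, F N x ∈ Set.Ioo m M) ∧ SolvesE P V σ N (F N))
    (hFuniq : ∀ N : ℕ, 1 ≤ N → ∀ G : ℝ → ℝ, Continuous G → Monotone G →
      (∀ x, G x ∈ Set.Ioo m M) → SolvesE P V σ N G → G = F N)
    (hInfuniq : ∀ G H : ℝ → ℝ,
      Continuous G → Monotone G → (∀ x, G x ∈ Set.Ioo m M) → SolvesEInf P V σ G →
      Continuous H → Monotone H → (∀ x, H x ∈ Set.Ioo m M) → SolvesEInf P V σ H → G = H) :
    ∃ Finf : ℝ → ℝ,
      (∀ x : ℝ, Tendsto (fun N : ℕ => F N x) atTop (nhds (Finf x))) ∧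
      SolvesEInf P V σ Finf ∧
      (∀ v ∈ Set.Ioo m M, ∀ X : ℕ → ℝ, (∀ N : ℕ, 1 ≤ N → F N (X N) = v) →
        Tendsto (fun N : ℕ =>
            X N * N * ∫ y in (0:ℝ)..1, (v - F N (X N * y)) * y ^ (N - 1))
          atTop (nhds 0)) := by
  obtain ⟨ms, G, hGc, hGm, hGI, hGs, hGt⟩ :=
    core_compact hVmeas hV hsupp hcont hσ hFsol (ns := fun n => n) tendsto_id
  have hlim : ∀ x : ℝ, Tendsto (fun N : ℕ => F N x) atTop (nhds (G x)) := by
    intro x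
    refine tendsto_of_subseq_tendsto fun ns hns => ?_
    obtain ⟨ms', H, hHc, hHm, hHI, hHs, hHt⟩ :=
      core_compact hVmeas hV hsupp hcont hσ hFsol (ns := ns) hns
    refine ⟨ms', ?_⟩
    rw [hInfuniq G H hGc hGm hGI hGs hHc hHm hHI hHs]
    exact hHt x
  refine ⟨G, hlim, hGs, ?_⟩
  intro v hv X hX
  obtain ⟨b, hb⟩ := G_exists_gt hVmeas hV hsupp hcont hσ hGc hGm hGI hGs hv.2
  obtain ⟨a, ha⟩ := G_exists_lt hVmeas hV hsupp hcont hσ hGc hGm hGI hGs hv.1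
  have hLK : 0 ≤ LK m M σ := mul_nonneg (by positivity) (gK_pos σ hσ).le
  have hz : Tendsto (fun N : ℕ => LK m M σ * (|a| + |b|) ^ 2 * (1 / ((N : ℝ) + 1))) atTop
      (nhds 0) := by
    have := tendsto_one_div_add_atTop_nhds_zero_nat (𝕜 := ℝ)
    simpa using this.const_mul (LK m M σ * (|a| + |b|) ^ 2)
  refine squeeze_zero_norm' ?_ hz
  filter_upwards [eventually_ge_atTop 1, (hlim a).eventually_lt_const ha,
    (hlim b).eventually_const_lt hb] with N hN h1 h2
  obtain ⟨hc, hm, hI, hS⟩ := hFsol N hN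
  have hXN := hX N hN
  have hXa : a ≤ X N := by
    by_contra h
    have := hm (not_le.1 h).le
    linarith
  have hXb : X N ≤ b := by
    by_contra h
    have := hm (not_le.1 h).le
    linarith
  have hXabs : |X N| ≤ |a| + |b| := abs_mem ⟨hXa, hXb⟩
  have hbd := profit_bound (solE_lip hVmeas hV hsupp hcont hσ ⟨hc, hI 0⟩ hN hS) hXN hN
  rw [Real.norm_eq_abs]
  refine hbd.trans ?_
  rw [mul_one_div]
  have hsq : X N ^ 2 ≤ (|a| + |b|) ^ 2 := by
    rw [← sq_abs]
    exact pow_le_pow_left₀ (abs_nonneg _) hXabs 2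
  gcongr
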